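/- arXiv:1704.04319 — 2 statements merged into one kernel-verified Lean document; each statement's English description precedes it below -/
import Mathlib

section
/- L¹ bound for an affine function on a triangle (equation (3.24) of the paper): Let T ⊂ ℝ² be a nondegenerate triangle with vertices a_i, a_j, a_k and area |T|, and let w : ℝ² → ℝ be affine on T with vertex values ordered so that w(a_i) ≥ w(a_j) ≥ w(a_k), with w(a_i) ≥ 0 and w(a_k) ≤ 0. Then ∫_T |w(x)| dx ≤ (7|T|/6) · (w(a_i) − w(a_k)). -/
open MeasureTheory Finset EuclideanGeometry

noncomputable section

/-- The Euclidean plane. -/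
abbrev E2 := EuclideanSpace ℝ (Fin 2)

/-- The closed triangle with vertices `a 0, a 1, a 2`. -/
def tri (a : Fin 3 → E2) : Set E2 := convexHull ℝ (Set.range a)

/-- The interior angle of the triangle at vertex `a i`. -/
def ang (a : Fin 3 → E2) (i : Fin 3) : ℝ :=
  EuclideanGeometry.angle (a (i + 1)) (a i) (a (i + 2))

/-- The length `|e_i|` of the edge opposite vertex `a i`. -/
def elen (a : Fin 3 → E2) (i : Fin 3) : ℝ := dist (a (i + 1)) (a (i + 2))

/-- The area `|T|` of the triangle. -/
def area (a : Fin 3 → E2) : ℝ := (volume (tri a)).toReal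

/-- The gradient (as a vector in the plane) of an affine map `E2 →ᵃ[ℝ] ℝ`. -/
def gradA (g : E2 →ᵃ[ℝ] ℝ) : E2 :=
  (InnerProductSpace.toDual ℝ E2).symm (LinearMap.toContinuousLinearMap g.linear)

/-!
The function `|w|` is convex on the triangle, hence at most its largest vertex value. As
`w(a_k) ≤ 0 ≤ w(a_i)`, each vertex value of `|w|` is at most `w(a_i) - w(a_k)`; so the inequality
holds even with the constant `1` in place of `7/6`.
-/

section ConvexHull

variable {E : Type*} [AddCommGroup E] [Module ℝ E] [MeasurableSpace E] {μ : Measure E}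

theorem setIntegral_convexHull_le_of_convexOn {s : Set E} (hμ : μ (convexHull ℝ s) < ⊤)
    {f : E → ℝ} (hf : ConvexOn ℝ (convexHull ℝ s) f) (hf₀ : ∀ x ∈ convexHull ℝ s, 0 ≤ f x)
    {C : ℝ} (hC : ∀ x ∈ s, f x ≤ C) :
    ∫ x in convexHull ℝ s, f x ∂μ ≤ C * μ.real (convexHull ℝ s) := by
  have hbound : ∀ x ∈ convexHull ℝ s, ‖f x‖ ≤ C := by
    intro x hx
    obtain ⟨y, hy, hxy⟩ := hf.exists_ge_of_mem_convexHull (subset_convexHull ℝ s) hx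
    rw [Real.norm_of_nonneg (hf₀ x hx)]
    exact hxy.trans (hC y hy)
  exact (Real.le_norm_self _).trans (norm_setIntegral_le_of_norm_le_const hμ hbound)

theorem setIntegral_norm_convexHull_le_of_eqOn_affineMap {F : Type*} [SeminormedAddCommGroup F]
    [NormedSpace ℝ F] {s : Set E} (hμ : μ (convexHull ℝ s) < ⊤) {w : E → F} {g : E →ᵃ[ℝ] F}
    (hw : Set.EqOn w g (convexHull ℝ s)) {C : ℝ} (hC : ∀ x ∈ s, ‖w x‖ ≤ C) :
    ∫ x in convexHull ℝ s, ‖w x‖ ∂μ ≤ C * μ.real (convexHull ℝ s) := by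
  have hconvex : ConvexOn ℝ (convexHull ℝ s) (fun x => ‖w x‖) :=
    ((convexOn_univ_norm.comp_affineMap g).subset (Set.subset_univ _)
      (convex_convexHull ℝ s)).congr fun x hx => congrArg norm (hw hx).symm
  exact setIntegral_convexHull_le_of_convexOn hμ hconvex (fun _ _ => norm_nonneg _) hC

theorem abs_integral_affine_triangle_general {ι : Type*} {a : ι → E}
    (hμ : μ (convexHull ℝ (Set.range a)) < ⊤) {w : E → ℝ} {g : E →ᵃ[ℝ] ℝ}
    (hw : Set.EqOn w g (convexHull ℝ (Set.range a))) {i k : ι}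
    (hord : ∀ l, w (a l) ∈ Set.Icc (w (a k)) (w (a i)))
    (hpos : 0 ≤ w (a i)) (hneg : w (a k) ≤ 0) :
    ∫ x in convexHull ℝ (Set.range a), |w x| ∂μ ≤
      μ.real (convexHull ℝ (Set.range a)) * (w (a i) - w (a k)) := by
  have hvertex : ∀ x ∈ Set.range a, ‖w x‖ ≤ w (a i) - w (a k) := by
    rintro _ ⟨l, rfl⟩
    obtain ⟨hmin, hmax⟩ := hord l
    exact abs_le.2 ⟨by linarith, by linarith⟩
  rw [mul_comm]
  exact setIntegral_norm_convexHull_le_of_eqOn_affineMap hμ hw hvertex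

end ConvexHull

theorem apply_mem_Icc_of_distinct_fin_three {α : Type*} [Preorder α] {f : Fin 3 → α}
    {i j k : Fin 3} (hij : i ≠ j) (hjk : j ≠ k) (hik : i ≠ k) (hfji : f j ≤ f i)
    (hfkj : f k ≤ f j) (l : Fin 3) : f l ∈ Set.Icc (f k) (f i) := by
  have hcover : l = i ∨ l = j ∨ l = k := by omega
  rcases hcover with rfl | rfl | rfl
  · exact ⟨hfkj.trans hfji, le_rfl⟩
  · exact ⟨hfkj, hfji⟩
  · exact ⟨le_rfl, hfkj.trans hfji⟩

theorem isCompact_tri (a : Fin 3 → E2) : IsCompact (tri a) :=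
  (Set.finite_range a).isCompact_convexHull ℝ

theorem area_nonneg (a : Fin 3 → E2) : 0 ≤ area a := ENNReal.toReal_nonneg

/-- **L¹ bound for an affine function on a triangle** (equation (3.24)):
if `w` is affine on `T` with vertex values `w(a_i) ≥ w(a_j) ≥ w(a_k)`,
`w(a_i) ≥ 0` and `w(a_k) ≤ 0`, then `∫_T |w| ≤ (7|T|/6)(w(a_i) - w(a_k))`. -/
theorem abs_integral_affine_triangle (a : Fin 3 → E2)
    (hind : AffineIndependent ℝ a) (i j k : Fin 3)
    (hij : i ≠ j) (hjk : j ≠ k) (hik : i ≠ k)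
    (w : E2 → ℝ) (g : E2 →ᵃ[ℝ] ℝ) (hw : ∀ x ∈ tri a, w x = g x)
    (hord₁ : w (a j) ≤ w (a i)) (hord₂ : w (a k) ≤ w (a j))
    (hpos : 0 ≤ w (a i)) (hneg : w (a k) ≤ 0) :
    (∫ x in tri a, |w x|) ≤ (7 * area a / 6) * (w (a i) - w (a k)) := by
  have hord := apply_mem_Icc_of_distinct_fin_three (f := w ∘ a) hij hjk hik hord₁ hord₂
  calc ∫ x in tri a, |w x|
      ≤ area a * (w (a i) - w (a k)) :=
        abs_integral_affine_triangle_general (isCompact_tri a).measure_lt_top hw hord hpos hneg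
    _ ≤ (7 * area a / 6) * (w (a i) - w (a k)) := by
        gcongr
        · exact sub_nonneg.2 (hord₂.trans hord₁)
        · linarith [area_nonneg a]
end
end

section
/- Secant-slope lower bound for the 1D counterexample profile (Remark in Section 2.1): Let 0 < k < 1/2 and let φ : [0,1] → ℝ be continuous with φ(0) = φ(1) = 1, k ≤ φ(t) ≤ 1 for all t ∈ [0,1], and ∫₀¹ φ(t) dt = 1/2. Then there exists t ∈ (0,1] such that (φ(0) − φ(t))/t > (1−k)²/(1−2k); that is, the magnitude of the slope of the secant line from (0, φ(0)) to (t, φ(t)) exceeds (1−k)²/(1−2k) for some t. -/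
open MeasureTheory

/-!
If every secant from the left endpoint descends with slope at most `m`, then `φ` lies above the
line of slope `-m` through `(a, φ a)`, and also above its floor `k`. As `k < φ b`, the integral of
`φ` strictly exceeds that of the larger of the two, which is the area of the rectangle under `k`
plus a triangle of height `φ a - k` and base `(φ a - k) / m`. The bound on slopes is the `m` for
which that triangle has area exactly `∫ (φ - k)`, which is a contradiction; the condition on `∫ φ`
says that the base of the triangle fits into `[a, b]`.
-/

section SecantSlope

variable {a b c k m p : ℝ} {φ : ℝ → ℝ}

theorem integral_sub_mul_sub_left :
    ∫ t in a..p, (c - m * (t - a)) = c * (p - a) - m * (p - a) ^ 2 / 2 := by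
  rw [intervalIntegral.integral_comp_sub_right (fun x => c - m * x), sub_self,
    intervalIntegral.integral_sub (by simp) (Continuous.intervalIntegrable (by fun_prop) _ _),
    intervalIntegral.integral_const_mul, integral_id, intervalIntegral.integral_const]
  simp only [smul_eq_mul]
  ring

theorem integral_max_sub_mul_sub_left (hm : 0 < m) (hkc : k ≤ c) (hcm : c - k ≤ m * (b - a)) :
    ∫ t in a..b, max (c - m * (t - a)) k = k * (b - a) + (c - k) ^ 2 / (2 * m) := by
  obtain ⟨p, hp⟩ : ∃ p, m * (p - a) = c - k := ⟨a + (c - k) / m, by field_simp; ring⟩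
  have hap : a ≤ p := sub_nonneg.1 (nonneg_of_mul_nonneg_right (by linarith) hm)
  have hpb : p ≤ b := sub_le_sub_iff_right a |>.1 (le_of_mul_le_mul_left (hp.trans_le hcm) hm)
  have hcont : Continuous fun t => max (c - m * (t - a)) k := by fun_prop
  have hleft : ∫ t in a..p, max (c - m * (t - a)) k = ∫ t in a..p, (c - m * (t - a)) := by
    refine intervalIntegral.integral_congr fun t ht => max_eq_left ?_
    rw [Set.uIcc_of_le hap] at ht
    linarith [mul_le_mul_of_nonneg_left (sub_le_sub_right ht.2 a) hm.le]
  have hright : ∫ t in p..b, max (c - m * (t - a)) k = ∫ _ in p..b, k := by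
    refine intervalIntegral.integral_congr fun t ht => max_eq_right ?_
    rw [Set.uIcc_of_le hpb] at ht
    linarith [mul_le_mul_of_nonneg_left (sub_le_sub_right ht.1 a) hm.le]
  rw [← intervalIntegral.integral_add_adjacent_intervals (hcont.intervalIntegrable a p)
    (hcont.intervalIntegrable p b), hleft, hright, integral_sub_mul_sub_left,
    intervalIntegral.integral_const, smul_eq_mul]
  obtain rfl : c = k + m * (p - a) := by linarith
  field_simp
  ring

theorem add_sq_div_lt_integral_of_sub_mul_sub_left_le (hab : a < b)
    (hφ : ContinuousOn φ (Set.Icc a b)) (hm : 0 < m) (hkc : k ≤ c) (hcm : c - k ≤ m * (b - a))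
    (hline : ∀ t ∈ Set.Icc a b, c - m * (t - a) ≤ φ t) (hfloor : ∀ t ∈ Set.Icc a b, k ≤ φ t)
    (hb : k < φ b) :
    k * (b - a) + (c - k) ^ 2 / (2 * m) < ∫ t in a..b, φ t := by
  rw [← integral_max_sub_mul_sub_left hm hkc hcm]
  refine intervalIntegral.integral_lt_integral_of_continuousOn_of_le_of_exists_lt hab
    (by fun_prop) hφ (fun t ht => ?_) ⟨b, Set.right_mem_Icc.2 hab.le, max_lt (by linarith) hb⟩
  have ht' := Set.Ioc_subset_Icc_self ht
  exact max_le (hline t ht') (hfloor t ht')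

theorem mul_sub_lt_integral_of_le_of_lt_right (hab : a < b)
    (hφ : ContinuousOn φ (Set.Icc a b)) (hfloor : ∀ t ∈ Set.Icc a b, k ≤ φ t) (hb : k < φ b) :
    k * (b - a) < ∫ t in a..b, φ t := by
  have hlt := intervalIntegral.integral_lt_integral_of_continuousOn_of_le_of_exists_lt hab
    continuousOn_const hφ (fun t ht => hfloor t (Set.Ioc_subset_Icc_self ht))
    ⟨b, Set.right_mem_Icc.2 hab.le, hb⟩
  rwa [intervalIntegral.integral_const, smul_eq_mul, mul_comm] at hlt

theorem secant_slope_lower_bound_general (hab : a < b)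
    (hφ : ContinuousOn φ (Set.Icc a b)) (hfloor : ∀ t ∈ Set.Icc a b, k ≤ φ t) (hb : k < φ b)
    (hint : ∫ t in a..b, φ t ≤ (φ a + k) / 2 * (b - a)) :
    ∃ t ∈ Set.Ioc a b,
      (φ a - k) ^ 2 / (2 * ((∫ t in a..b, φ t) - k * (b - a))) < (φ a - φ t) / (t - a) := by
  set A := (∫ t in a..b, φ t) - k * (b - a)
  by_contra! hslope
  have hA_pos : 0 < A := sub_pos.2 (mul_sub_lt_integral_of_le_of_lt_right hab hφ hfloor hb)
  have hA_le : 2 * A ≤ (φ a - k) * (b - a) := by linarith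
  have hka : 0 < φ a - k := pos_of_mul_pos_left (by linarith [hA_le]) (sub_pos.2 hab).le
  set m := (φ a - k) ^ 2 / (2 * A) with hm
  have hm_pos : 0 < m := by positivity
  have hbase : φ a - k ≤ m * (b - a) := by
    rw [hm, div_mul_eq_mul_div, le_div_iff₀ (by positivity)]
    nlinarith [mul_le_mul_of_nonneg_left hA_le hka.le]
  have hline : ∀ t ∈ Set.Icc a b, φ a - m * (t - a) ≤ φ t := by
    intro t ht
    obtain rfl | hat := ht.1.eq_or_lt
    · simp
    · linarith [(div_le_iff₀ (sub_pos.2 hat)).1 (hslope t ⟨hat, ht.2⟩)]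
  have harea : (φ a - k) ^ 2 / (2 * m) = A := by
    rw [hm]
    field_simp
  linarith [add_sq_div_lt_integral_of_sub_mul_sub_left_le hab hφ hm_pos (by linarith) hbase
    hline hfloor hb]

end SecantSlope

/-- **Secant-slope lower bound for the 1D counterexample profile** (Remark, Section 2.1):
if `0 < k < 1/2` and `φ : [0,1] → ℝ` is continuous with `φ 0 = φ 1 = 1`,
`k ≤ φ ≤ 1` on `[0,1]` and `∫₀¹ φ = 1/2`, then there is `t ∈ (0,1]` with
`(φ 0 - φ t)/t > (1-k)²/(1-2k)`. -/
theorem secant_slope_lower_bound (k : ℝ) (hk0 : 0 < k) (hk : k < 1 / 2)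
    (φ : ℝ → ℝ) (hcont : ContinuousOn φ (Set.Icc 0 1))
    (h0 : φ 0 = 1) (h1 : φ 1 = 1)
    (hbound : ∀ t ∈ Set.Icc (0 : ℝ) 1, k ≤ φ t ∧ φ t ≤ 1)
    (hint : (∫ t in (0 : ℝ)..1, φ t) = 1 / 2) :
    ∃ t ∈ Set.Ioc (0 : ℝ) 1, (φ 0 - φ t) / t > (1 - k) ^ 2 / (1 - 2 * k) := by
  have hA : 1 - 2 * k = 2 * ((∫ t in (0 : ℝ)..1, φ t) - k * (1 - 0)) := by rw [hint]; ring
  simpa [h0, hA] using secant_slope_lower_bound_general one_pos hcont (fun t ht => (hbound t ht).1)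
    (by linarith) (by linarith)
end
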